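/- Let ρ_BTN = ρ_b ⊗ ρ_c ⊗ ρ_a be a basic triangle network (BTN) state and let {A_i}, {B_j}, {C_k} be finite families of local observables for Alice, Bob and Charlie. Define T_c as the covariance matrix Γ({A_i^(2) ⊗ 1_{B₁}, 1_{A₂} ⊗ B_j^(1)}, ρ_c) of the reduced observables on the source state ρ_c of A₂B₁, padded with zero blocks in the Charlie sector; define T_b = Γ({A_i^(1), C_k^(2)}, ρ_b) on the A₁ and C₂ factors padded with zeros in the Bob sector, and T_a = Γ({B_j^(2), C_k^(1)}, ρ_a) padded with zeros in the Alice sector, analogously. Then the matrix R := Γ({A_i, B_j, C_k}, ρ_BTN) − T_c − T_b − T_a is block-diagonal with respect to the three party sectors and is positive semidefinite; in particular Γ({A_i, B_j, C_k}, ρ_BTN) = T_c + T_b + T_a + R is a decomposition into four positive semidefinite matrices. -/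

import Mathlib

open Matrix Kronecker BigOperators
open scoped ComplexOrder

noncomputable section

/-- Covariance matrix of a family of observables `M` in the state `ρ`. -/
def covMat {n ι : Type*} [Fintype n] (M : ι → Matrix n n ℂ) (ρ : Matrix n n ℂ) :
    Matrix ι ι ℂ :=
  Matrix.of fun i j => (M i * M j * ρ).trace - (M i * ρ).trace * (M j * ρ).trace

/-- A density matrix: positive semidefinite with unit trace. -/
def IsDensity {n : Type*} [Fintype n] (ρ : Matrix n n ℂ) : Prop :=
  ρ.PosSemidef ∧ ρ.trace = 1

/-- Partial trace over the first tensor factor. -/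
def ptrace₁ {m n : Type*} [Fintype m] (M : Matrix (m × n) (m × n) ℂ) : Matrix n n ℂ :=
  Matrix.of fun i j => ∑ k, M (k, i) (k, j)

/-- Partial trace over the second tensor factor. -/
def ptrace₂ {m n : Type*} [Fintype n] (M : Matrix (m × n) (m × n) ℂ) : Matrix m m ℂ :=
  Matrix.of fun i j => ∑ k, M (i, k) (j, k)

/-- Index of a two-qudit space. -/
abbrev D2 (d : ℕ) := Fin d × Fin d

/-- Index of the six-factor triangle-network space, ordered C₂, A₁, A₂, B₁, B₂, C₁. -/
abbrev TriIdx (d : ℕ) := D2 d × (D2 d × D2 d)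

/-- The basic triangle network state `ρ_b ⊗ ρ_c ⊗ ρ_a`. -/
def btnState {d : ℕ} (ρa ρb ρc : Matrix (D2 d) (D2 d) ℂ) :
    Matrix (TriIdx d) (TriIdx d) ℂ :=
  ρb ⊗ₖ (ρc ⊗ₖ ρa)

/-- Embed an observable of Alice (acting on A₁A₂) into the global space. -/
def embedA {d : ℕ} (M : Matrix (D2 d) (D2 d) ℂ) : Matrix (TriIdx d) (TriIdx d) ℂ :=
  Matrix.of fun p q =>
    if p.1.1 = q.1.1 ∧ p.2.1.2 = q.2.1.2 ∧ p.2.2 = q.2.2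
    then M (p.1.2, p.2.1.1) (q.1.2, q.2.1.1) else 0

/-- Embed an observable of Bob (acting on B₁B₂) into the global space. -/
def embedB {d : ℕ} (M : Matrix (D2 d) (D2 d) ℂ) : Matrix (TriIdx d) (TriIdx d) ℂ :=
  Matrix.of fun p q =>
    if p.1 = q.1 ∧ p.2.1.1 = q.2.1.1 ∧ p.2.2.2 = q.2.2.2
    then M (p.2.1.2, p.2.2.1) (q.2.1.2, q.2.2.1) else 0

/-- Embed an observable of Charlie (acting on C₁C₂) into the global space. -/
def embedC {d : ℕ} (M : Matrix (D2 d) (D2 d) ℂ) : Matrix (TriIdx d) (TriIdx d) ℂ :=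
  Matrix.of fun p q =>
    if p.1.2 = q.1.2 ∧ p.2.1 = q.2.1 ∧ p.2.2.1 = q.2.2.1
    then M (p.2.2.2, p.1.1) (q.2.2.2, q.1.1) else 0

section marginals
variable {d : ℕ} (ρa ρb ρc : Matrix (D2 d) (D2 d) ℂ)

/-- Marginal of ρ_BTN on A₁ (second factor of ρ_b = ρ^{C₂A₁}). -/
def margA1 : Matrix (Fin d) (Fin d) ℂ := ptrace₁ ρb
/-- Marginal on C₂. -/
def margC2 : Matrix (Fin d) (Fin d) ℂ := ptrace₂ ρb
/-- Marginal on A₂ (first factor of ρ_c = ρ^{A₂B₁}). -/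
def margA2 : Matrix (Fin d) (Fin d) ℂ := ptrace₂ ρc
/-- Marginal on B₁. -/
def margB1 : Matrix (Fin d) (Fin d) ℂ := ptrace₁ ρc
/-- Marginal on B₂ (first factor of ρ_a = ρ^{B₂C₁}). -/
def margB2 : Matrix (Fin d) (Fin d) ℂ := ptrace₂ ρa
/-- Marginal on C₁. -/
def margC1 : Matrix (Fin d) (Fin d) ℂ := ptrace₁ ρa

/-- Reduced observable A^(2) = tr_{A₁}(A (ρ^{A₁} ⊗ 1)). -/
def redA2 (M : Matrix (D2 d) (D2 d) ℂ) : Matrix (Fin d) (Fin d) ℂ :=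
  ptrace₁ (M * (margA1 ρb ⊗ₖ (1 : Matrix (Fin d) (Fin d) ℂ)))
/-- Reduced observable A^(1) = tr_{A₂}(A (1 ⊗ ρ^{A₂})). -/
def redA1 (M : Matrix (D2 d) (D2 d) ℂ) : Matrix (Fin d) (Fin d) ℂ :=
  ptrace₂ (M * ((1 : Matrix (Fin d) (Fin d) ℂ) ⊗ₖ margA2 ρc))
/-- Reduced observable B^(1) = tr_{B₂}(B (1 ⊗ ρ^{B₂})). -/
def redB1 (M : Matrix (D2 d) (D2 d) ℂ) : Matrix (Fin d) (Fin d) ℂ :=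
  ptrace₂ (M * ((1 : Matrix (Fin d) (Fin d) ℂ) ⊗ₖ margB2 ρa))
/-- Reduced observable B^(2) = tr_{B₁}(B (ρ^{B₁} ⊗ 1)). -/
def redB2 (M : Matrix (D2 d) (D2 d) ℂ) : Matrix (Fin d) (Fin d) ℂ :=
  ptrace₁ (M * (margB1 ρc ⊗ₖ (1 : Matrix (Fin d) (Fin d) ℂ)))
/-- Reduced observable C^(1) = tr_{C₂}(C (1 ⊗ ρ^{C₂})); here C acts on C₁C₂. -/
def redC1 (M : Matrix (D2 d) (D2 d) ℂ) : Matrix (Fin d) (Fin d) ℂ :=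
  ptrace₂ (M * ((1 : Matrix (Fin d) (Fin d) ℂ) ⊗ₖ margC2 ρb))
/-- Reduced observable C^(2) = tr_{C₁}(C (ρ^{C₁} ⊗ 1)). -/
def redC2 (M : Matrix (D2 d) (D2 d) ℂ) : Matrix (Fin d) (Fin d) ℂ :=
  ptrace₁ (M * (margC1 ρa ⊗ₖ (1 : Matrix (Fin d) (Fin d) ℂ)))

end marginals


/-- Sector (party) of an index of the combined observable family:
`0` for Alice, `1` for Bob, `2` for Charlie. -/
def sector {kA kB kC : ℕ} : Fin kA ⊕ (Fin kB ⊕ Fin kC) → Fin 3 :=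
  Sum.elim (fun _ => 0) (Sum.elim (fun _ => 1) (fun _ => 2))

/-!
The proof is a Hoeffding decomposition. In a product state `σ ⊗ τ` a local observable splits as
`M = M⁽¹⁾ ⊗ 1 + 1 ⊗ M⁽²⁾ + M'`, where the `M⁽ⁱ⁾` are its reduced observables and the interaction
part `M'` has scalar reductions; the three parts are uncorrelated. The covariance of two observables
of different parties only sees their reductions to the shared source, so it vanishes on interaction
parts. Hence `R` is itself the covariance matrix of the interaction parts in the network state,
which makes it both positive semidefinite and block-diagonal.
-/

theorem star_trace_mul {n R : Type*} [Fintype n] [CommSemiring R] [StarRing R] {ρ : Matrix n n R}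
    (hρ : ρ.IsHermitian) (M : Matrix n n R) : star (M * ρ).trace = (Mᴴ * ρ).trace := by
  rw [← trace_conjTranspose, conjTranspose_mul, hρ.eq, trace_mul_comm]

theorem commute_submatrix_equiv {m n R : Type*} [Fintype m] [Fintype n]
    [NonUnitalNonAssocSemiring R] {M N : Matrix n n R} (h : Commute M N) (e : m ≃ n) :
    Commute (M.submatrix e e) (N.submatrix e e) := by
  simp only [Commute, SemiconjBy, submatrix_mul_equiv, h.eq]

section Kronecker

@[elab_as_elim]
theorem kronecker_induction {l m n p R : Type*} [Finite l] [Finite m] [Finite n] [Finite p]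
    [NonAssocSemiring R] {P : Matrix (l × m) (n × p) R → Prop} (M : Matrix (l × m) (n × p) R)
    (add : ∀ M N, P M → P N → P (M + N))
    (kronecker : ∀ (X : Matrix l n R) (Y : Matrix m p R), P (X ⊗ₖ Y)) : P M := by
  classical
  refine Matrix.induction_on' M (by simpa using kronecker 0 0) add ?_
  rintro ⟨i, k⟩ ⟨j, l⟩ x
  simpa [single_kronecker_single] using kronecker (single i j x) (single k l 1)

theorem isHermitian_kronecker {m n R : Type*} [CommMagma R] [StarMul R]
    {X : Matrix m m R} {Y : Matrix n n R} (hX : X.IsHermitian) (hY : Y.IsHermitian) :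
    (X ⊗ₖ Y).IsHermitian := by
  rw [Matrix.IsHermitian, conjTranspose_kronecker, hX.eq, hY.eq]

theorem commute_kronecker_one_one_kronecker {m n R : Type*} [Fintype m] [Fintype n]
    [DecidableEq m] [DecidableEq n] [CommSemiring R] (X : Matrix m m R) (Y : Matrix n n R) :
    Commute (X ⊗ₖ (1 : Matrix n n R)) ((1 : Matrix m m R) ⊗ₖ Y) := by
  simp only [Commute, SemiconjBy, ← mul_kronecker_mul, mul_one, one_mul]

end Kronecker

section PartialTraceFst

variable {m n : Type*} [Fintype m]

theorem ptrace₁_add (M N : Matrix (m × n) (m × n) ℂ) :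
    ptrace₁ (M + N) = ptrace₁ M + ptrace₁ N := by
  ext i j
  simp [ptrace₁, Finset.sum_add_distrib]

theorem ptrace₁_smul (c : ℂ) (M : Matrix (m × n) (m × n) ℂ) :
    ptrace₁ (c • M) = c • ptrace₁ M := by
  ext i j
  simp [ptrace₁, Finset.mul_sum]

theorem ptrace₁_kronecker (X : Matrix m m ℂ) (Y : Matrix n n ℂ) :
    ptrace₁ (X ⊗ₖ Y) = X.trace • Y := by
  ext i j
  simp [ptrace₁, Matrix.trace, Finset.sum_mul]

theorem isHermitian_ptrace₁ {M : Matrix (m × n) (m × n) ℂ} (hM : M.IsHermitian) :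
    (ptrace₁ M).IsHermitian :=
  IsHermitian.ext fun i j => by simp [ptrace₁, ← hM.apply (_, i) (_, j)]

theorem trace_ptrace₁ [Fintype n] (M : Matrix (m × n) (m × n) ℂ) :
    (ptrace₁ M).trace = M.trace := by
  simp [ptrace₁, Matrix.trace, Fintype.sum_prod_type_right]

theorem trace_one_kronecker_mul [Fintype n] [DecidableEq m] (X : Matrix n n ℂ)
    (ρ : Matrix (m × n) (m × n) ℂ) :
    (((1 : Matrix m m ℂ) ⊗ₖ X) * ρ).trace = (X * ptrace₁ ρ).trace := by
  induction ρ using kronecker_induction with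
  | add M N hM hN => simp [mul_add, ptrace₁_add, hM, hN]
  | kronecker Y Z => simp [← mul_kronecker_mul, trace_kronecker, ptrace₁_kronecker]

end PartialTraceFst

section PartialTraceSnd

variable {m n : Type*} [Fintype n]

theorem ptrace₂_add (M N : Matrix (m × n) (m × n) ℂ) :
    ptrace₂ (M + N) = ptrace₂ M + ptrace₂ N := by
  ext i j
  simp [ptrace₂, Finset.sum_add_distrib]

theorem ptrace₂_smul (c : ℂ) (M : Matrix (m × n) (m × n) ℂ) :
    ptrace₂ (c • M) = c • ptrace₂ M := by
  ext i j
  simp [ptrace₂, Finset.mul_sum]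

theorem ptrace₂_kronecker (X : Matrix m m ℂ) (Y : Matrix n n ℂ) :
    ptrace₂ (X ⊗ₖ Y) = Y.trace • X := by
  ext i j
  simp [ptrace₂, Matrix.trace, Finset.mul_sum, mul_comm]

theorem isHermitian_ptrace₂ {M : Matrix (m × n) (m × n) ℂ} (hM : M.IsHermitian) :
    (ptrace₂ M).IsHermitian :=
  IsHermitian.ext fun i j => by simp [ptrace₂, ← hM.apply (i, _) (j, _)]

theorem trace_ptrace₂ [Fintype m] (M : Matrix (m × n) (m × n) ℂ) :
    (ptrace₂ M).trace = M.trace := by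
  simp [ptrace₂, Matrix.trace, Fintype.sum_prod_type]

theorem trace_kronecker_one_mul [Fintype m] [DecidableEq n] (X : Matrix m m ℂ)
    (ρ : Matrix (m × n) (m × n) ℂ) :
    ((X ⊗ₖ (1 : Matrix n n ℂ)) * ρ).trace = (X * ptrace₂ ρ).trace := by
  induction ρ using kronecker_induction with
  | add M N hM hN => simp [mul_add, ptrace₂_add, hM, hN]
  | kronecker Y Z => simp [← mul_kronecker_mul, trace_kronecker, ptrace₂_kronecker, mul_comm]

end PartialTraceSnd

section ReduceFst

variable {m n : Type*} [Fintype m] [Fintype n] [DecidableEq m]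

/-- The reduced observable `tr₂ (M (1 ⊗ τ))` on the first tensor factor when the second one is in
the state `τ`, as a linear map in `M`. -/
def reduceFst (τ : Matrix n n ℂ) : Matrix (m × n) (m × n) ℂ →ₗ[ℂ] Matrix m m ℂ where
  toFun M := ptrace₂ (M * ((1 : Matrix m m ℂ) ⊗ₖ τ))
  map_add' M N := by rw [add_mul, ptrace₂_add]
  map_smul' c M := by rw [smul_mul_assoc, ptrace₂_smul, RingHom.id_apply]

variable (σ : Matrix m m ℂ) (τ : Matrix n n ℂ)

theorem reduceFst_kronecker (X : Matrix m m ℂ) (Y : Matrix n n ℂ) :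
    reduceFst τ (X ⊗ₖ Y) = (Y * τ).trace • X := by
  simp [reduceFst, ← mul_kronecker_mul, ptrace₂_kronecker]

theorem trace_mul_kronecker_eq_reduceFst (M : Matrix (m × n) (m × n) ℂ) :
    (M * (σ ⊗ₖ τ)).trace = (reduceFst τ M * σ).trace := by
  induction M using kronecker_induction with
  | add M N hM hN => simp [add_mul, hM, hN]
  | kronecker X Y =>
    simp [← mul_kronecker_mul, trace_kronecker, reduceFst_kronecker, mul_comm]

theorem reduceFst_kronecker_one_mul [DecidableEq n] (X : Matrix m m ℂ)
    (M : Matrix (m × n) (m × n) ℂ) :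
    reduceFst τ ((X ⊗ₖ (1 : Matrix n n ℂ)) * M) = X * reduceFst τ M := by
  induction M using kronecker_induction with
  | add M N hM hN => simp [mul_add, hM, hN]
  | kronecker Y Z => simp [← mul_kronecker_mul, reduceFst_kronecker]

theorem reduceFst_mul_kronecker_one [DecidableEq n] (M : Matrix (m × n) (m × n) ℂ)
    (X : Matrix m m ℂ) :
    reduceFst τ (M * (X ⊗ₖ (1 : Matrix n n ℂ))) = reduceFst τ M * X := by
  induction M using kronecker_induction with
  | add M N hM hN => simp [add_mul, hM, hN]
  | kronecker Y Z => simp [← mul_kronecker_mul, reduceFst_kronecker]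

variable {τ}

theorem conjTranspose_reduceFst (hτ : τ.IsHermitian) (M : Matrix (m × n) (m × n) ℂ) :
    (reduceFst τ M)ᴴ = reduceFst τ Mᴴ := by
  induction M using kronecker_induction with
  | add M N hM hN => simp [conjTranspose_add, hM, hN]
  | kronecker X Y =>
    simp only [conjTranspose_kronecker, reduceFst_kronecker, conjTranspose_smul,
      star_trace_mul hτ]

theorem isHermitian_reduceFst (hτ : τ.IsHermitian) {M : Matrix (m × n) (m × n) ℂ}
    (hM : M.IsHermitian) : (reduceFst τ M).IsHermitian := by
  rw [Matrix.IsHermitian, conjTranspose_reduceFst hτ, hM.eq]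

end ReduceFst

section ReduceSnd

variable {m n : Type*} [Fintype m] [Fintype n] [DecidableEq n]

/-- The reduced observable `tr₁ (M (σ ⊗ 1))` on the second tensor factor when the first one is in
the state `σ`, as a linear map in `M`. -/
def reduceSnd (σ : Matrix m m ℂ) : Matrix (m × n) (m × n) ℂ →ₗ[ℂ] Matrix n n ℂ where
  toFun M := ptrace₁ (M * (σ ⊗ₖ (1 : Matrix n n ℂ)))
  map_add' M N := by rw [add_mul, ptrace₁_add]
  map_smul' c M := by rw [smul_mul_assoc, ptrace₁_smul, RingHom.id_apply]

variable (σ : Matrix m m ℂ) (τ : Matrix n n ℂ)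

theorem reduceSnd_kronecker (X : Matrix m m ℂ) (Y : Matrix n n ℂ) :
    reduceSnd σ (X ⊗ₖ Y) = (X * σ).trace • Y := by
  simp [reduceSnd, ← mul_kronecker_mul, ptrace₁_kronecker]

theorem trace_mul_kronecker_eq_reduceSnd (M : Matrix (m × n) (m × n) ℂ) :
    (M * (σ ⊗ₖ τ)).trace = (reduceSnd σ M * τ).trace := by
  induction M using kronecker_induction with
  | add M N hM hN => simp [add_mul, hM, hN]
  | kronecker X Y => simp [← mul_kronecker_mul, trace_kronecker, reduceSnd_kronecker]

theorem reduceSnd_one_kronecker_mul [DecidableEq m] (Y : Matrix n n ℂ)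
    (M : Matrix (m × n) (m × n) ℂ) :
    reduceSnd σ (((1 : Matrix m m ℂ) ⊗ₖ Y) * M) = Y * reduceSnd σ M := by
  induction M using kronecker_induction with
  | add M N hM hN => simp [mul_add, hM, hN]
  | kronecker X Z => simp [← mul_kronecker_mul, reduceSnd_kronecker]

theorem reduceSnd_mul_one_kronecker [DecidableEq m] (M : Matrix (m × n) (m × n) ℂ)
    (Y : Matrix n n ℂ) :
    reduceSnd σ (M * ((1 : Matrix m m ℂ) ⊗ₖ Y)) = reduceSnd σ M * Y := by
  induction M using kronecker_induction with
  | add M N hM hN => simp [add_mul, hM, hN]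
  | kronecker X Z => simp [← mul_kronecker_mul, reduceSnd_kronecker]

variable {σ}

theorem conjTranspose_reduceSnd (hσ : σ.IsHermitian) (M : Matrix (m × n) (m × n) ℂ) :
    (reduceSnd σ M)ᴴ = reduceSnd σ Mᴴ := by
  induction M using kronecker_induction with
  | add M N hM hN => simp [conjTranspose_add, hM, hN]
  | kronecker X Y =>
    simp only [conjTranspose_kronecker, reduceSnd_kronecker, conjTranspose_smul,
      star_trace_mul hσ]

theorem isHermitian_reduceSnd (hσ : σ.IsHermitian) {M : Matrix (m × n) (m × n) ℂ}
    (hM : M.IsHermitian) : (reduceSnd σ M).IsHermitian := by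
  rw [Matrix.IsHermitian, conjTranspose_reduceSnd hσ, hM.eq]

end ReduceSnd

section StateCov

variable {m n : Type*} [Fintype m] [Fintype n]

/-- The covariance `tr (M N ρ) - tr (M ρ) tr (N ρ)` of two observables in the state `ρ`, as a
bilinear form; `covMat` consists of its values. -/
def stateCov (ρ : Matrix n n ℂ) : Matrix n n ℂ →ₗ[ℂ] Matrix n n ℂ →ₗ[ℂ] ℂ :=
  LinearMap.mk₂ ℂ (fun M N => (M * N * ρ).trace - (M * ρ).trace * (N * ρ).trace)
    (fun M M' N => by simp only [add_mul, trace_add]; ring)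
    (fun c M N => by simp only [smul_mul_assoc, trace_smul, smul_eq_mul]; ring)
    (fun M N N' => by simp only [mul_add, add_mul, trace_add]; ring)
    (fun c M N => by
      simp only [smul_mul_assoc, mul_smul_comm, trace_smul, smul_eq_mul]; ring)

theorem stateCov_apply (ρ M N : Matrix n n ℂ) :
    stateCov ρ M N = (M * N * ρ).trace - (M * ρ).trace * (N * ρ).trace :=
  rfl

theorem covMat_apply {ι : Type*} (M : ι → Matrix n n ℂ) (ρ : Matrix n n ℂ) (i j : ι) :
    covMat M ρ i j = stateCov ρ (M i) (M j) :=
  rfl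

theorem stateCov_comm_of_commute (ρ : Matrix n n ℂ) {M N : Matrix n n ℂ} (h : Commute M N) :
    stateCov ρ M N = stateCov ρ N M := by
  rw [stateCov_apply, stateCov_apply, h.eq, mul_comm (M * ρ).trace]

theorem stateCov_submatrix_equiv (e : m ≃ n) (ρ M N : Matrix n n ℂ) :
    stateCov (ρ.submatrix e e) (M.submatrix e e) (N.submatrix e e) = stateCov ρ M N := by
  have trace_submatrix (X : Matrix n n ℂ) : (X.submatrix e e).trace = X.trace :=
    e.sum_comp fun i => X i i
  simp only [stateCov_apply, submatrix_mul_equiv, trace_submatrix]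

section UnitTrace

variable [DecidableEq n] {ρ : Matrix n n ℂ}

theorem stateCov_one_left (hρ : ρ.trace = 1) (N : Matrix n n ℂ) : stateCov ρ 1 N = 0 := by
  simp [stateCov_apply, hρ]

theorem stateCov_one_right (hρ : ρ.trace = 1) (M : Matrix n n ℂ) : stateCov ρ M 1 = 0 := by
  simp [stateCov_apply, hρ]

end UnitTrace

section Positivity

variable {ρ : Matrix n n ℂ}

theorem star_stateCov (hρ : ρ.IsHermitian) (M N : Matrix n n ℂ) :
    star (stateCov ρ M N) = stateCov ρ Nᴴ Mᴴ := by
  simp only [stateCov_apply, star_sub, star_mul, star_trace_mul hρ, conjTranspose_mul]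

theorem stateCov_conjTranspose_self_nonneg (hρ : IsDensity ρ) (M : Matrix n n ℂ) :
    0 ≤ stateCov ρ Mᴴ M := by
  classical
  set N := M - (M * ρ).trace • (1 : Matrix n n ℂ) with hN
  have hcov : stateCov ρ Mᴴ M = stateCov ρ Nᴴ N := by
    simp [hN, conjTranspose_sub, conjTranspose_smul, stateCov_one_left hρ.2,
      stateCov_one_right hρ.2]
  have hmean : (N * ρ).trace = 0 := by simp [hN, sub_mul, hρ.2]
  rw [hcov, stateCov_apply, hmean, mul_zero, sub_zero, mul_assoc, trace_mul_comm]
  exact (hρ.1.mul_mul_conjTranspose_same N).trace_nonneg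

theorem posSemidef_covMat {ι : Type*} (hρ : IsDensity ρ) {M : ι → Matrix n n ℂ}
    (hM : ∀ i, (M i).IsHermitian) : (covMat M ρ).PosSemidef := by
  refine ⟨IsHermitian.ext fun i j => ?_, fun x => ?_⟩
  · rw [covMat_apply, covMat_apply, star_stateCov hρ.1.isHermitian, (hM i).eq, (hM j).eq]
  · have h := stateCov_conjTranspose_self_nonneg hρ (x.sum fun i c => c • M i)
    simp only [Finsupp.sum] at h ⊢
    rw [Finset.sum_comm]
    simpa [conjTranspose_sum, conjTranspose_smul, (hM _).eq, covMat_apply,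
      Finset.mul_sum, mul_comm, mul_left_comm, mul_assoc] using h

end Positivity

theorem stateCov_kronecker_one [DecidableEq n] (ρ : Matrix (m × n) (m × n) ℂ)
    (X Y : Matrix m m ℂ) :
    stateCov ρ (X ⊗ₖ (1 : Matrix n n ℂ)) (Y ⊗ₖ (1 : Matrix n n ℂ)) =
      stateCov (ptrace₂ ρ) X Y := by
  simp only [stateCov_apply, ← mul_kronecker_mul, mul_one, trace_kronecker_one_mul]

theorem stateCov_one_kronecker [DecidableEq m] (ρ : Matrix (m × n) (m × n) ℂ)
    (X Y : Matrix n n ℂ) :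
    stateCov ρ ((1 : Matrix m m ℂ) ⊗ₖ X) ((1 : Matrix m m ℂ) ⊗ₖ Y) =
      stateCov (ptrace₁ ρ) X Y := by
  simp only [stateCov_apply, ← mul_kronecker_mul, mul_one, trace_one_kronecker_mul]

end StateCov

section Interaction

variable {m n : Type*} [Fintype m] [Fintype n] [DecidableEq m] [DecidableEq n]
  {σ : Matrix m m ℂ} {τ : Matrix n n ℂ}

theorem stateCov_kronecker_one_left (hτ : τ.trace = 1) (X : Matrix m m ℂ)
    (N : Matrix (m × n) (m × n) ℂ) :
    stateCov (σ ⊗ₖ τ) (X ⊗ₖ (1 : Matrix n n ℂ)) N = stateCov σ X (reduceFst τ N) := by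
  simp only [stateCov_apply, trace_mul_kronecker_eq_reduceFst, reduceFst_kronecker_one_mul,
    reduceFst_kronecker, one_mul, hτ, one_smul]

theorem stateCov_kronecker_one_right (hτ : τ.trace = 1) (M : Matrix (m × n) (m × n) ℂ)
    (X : Matrix m m ℂ) :
    stateCov (σ ⊗ₖ τ) M (X ⊗ₖ (1 : Matrix n n ℂ)) = stateCov σ (reduceFst τ M) X := by
  simp only [stateCov_apply, trace_mul_kronecker_eq_reduceFst, reduceFst_mul_kronecker_one,
    reduceFst_kronecker, one_mul, hτ, one_smul]

theorem stateCov_one_kronecker_left (hσ : σ.trace = 1) (Y : Matrix n n ℂ)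
    (N : Matrix (m × n) (m × n) ℂ) :
    stateCov (σ ⊗ₖ τ) ((1 : Matrix m m ℂ) ⊗ₖ Y) N = stateCov τ Y (reduceSnd σ N) := by
  simp only [stateCov_apply, trace_mul_kronecker_eq_reduceSnd, reduceSnd_one_kronecker_mul,
    reduceSnd_kronecker, one_mul, hσ, one_smul]

theorem stateCov_one_kronecker_right (hσ : σ.trace = 1) (M : Matrix (m × n) (m × n) ℂ)
    (Y : Matrix n n ℂ) :
    stateCov (σ ⊗ₖ τ) M ((1 : Matrix m m ℂ) ⊗ₖ Y) = stateCov τ (reduceSnd σ M) Y := by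
  simp only [stateCov_apply, trace_mul_kronecker_eq_reduceSnd, reduceSnd_mul_one_kronecker,
    reduceSnd_kronecker, one_mul, hσ, one_smul]

/-- The interaction part of `M` in the product state `σ ⊗ τ`: what remains of `M` after its two
reduced observables are subtracted. The mean of `M` is not added back, so that the reductions of the
interaction part are scalars rather than zero; covariances do not see the difference. -/
def interaction (σ : Matrix m m ℂ) (τ : Matrix n n ℂ) (M : Matrix (m × n) (m × n) ℂ) :
    Matrix (m × n) (m × n) ℂ :=
  M - reduceFst τ M ⊗ₖ (1 : Matrix n n ℂ) - (1 : Matrix m m ℂ) ⊗ₖ reduceSnd σ M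

theorem isHermitian_interaction (hσ : σ.IsHermitian) (hτ : τ.IsHermitian)
    {M : Matrix (m × n) (m × n) ℂ} (hM : M.IsHermitian) : (interaction σ τ M).IsHermitian := by
  simp only [Matrix.IsHermitian, interaction, conjTranspose_sub, conjTranspose_kronecker,
    conjTranspose_reduceFst hτ, conjTranspose_reduceSnd hσ, conjTranspose_one, hM.eq]

theorem reduceFst_interaction (hτ : τ.trace = 1) (M : Matrix (m × n) (m × n) ℂ) :
    reduceFst τ (interaction σ τ M) = -(M * (σ ⊗ₖ τ)).trace • (1 : Matrix m m ℂ) := by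
  simp [interaction, reduceFst_kronecker, hτ, trace_mul_kronecker_eq_reduceSnd]

theorem reduceSnd_interaction (hσ : σ.trace = 1) (M : Matrix (m × n) (m × n) ℂ) :
    reduceSnd σ (interaction σ τ M) = -(M * (σ ⊗ₖ τ)).trace • (1 : Matrix n n ℂ) := by
  simp [interaction, reduceSnd_kronecker, hσ, trace_mul_kronecker_eq_reduceFst]

theorem stateCov_kronecker_eq_add_interaction (hσ : σ.trace = 1) (hτ : τ.trace = 1)
    (M N : Matrix (m × n) (m × n) ℂ) :
    stateCov (σ ⊗ₖ τ) M N =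
      stateCov σ (reduceFst τ M) (reduceFst τ N) + stateCov τ (reduceSnd σ M) (reduceSnd σ N) +
        stateCov (σ ⊗ₖ τ) (interaction σ τ M) (interaction σ τ N) := by
  have hright : stateCov (σ ⊗ₖ τ) (interaction σ τ M) (interaction σ τ N) =
      stateCov (σ ⊗ₖ τ) (interaction σ τ M) N := by
    conv_lhs => enter [2]; rw [interaction]
    simp [stateCov_kronecker_one_right hτ, stateCov_one_kronecker_right hσ,
      reduceFst_interaction hτ, reduceSnd_interaction hσ, stateCov_one_left hσ,
      stateCov_one_left hτ]
  rw [hright, interaction, map_sub, map_sub, LinearMap.sub_apply, LinearMap.sub_apply,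
    stateCov_kronecker_one_left hτ, stateCov_one_kronecker_left hσ]
  ring

end Interaction

section Embedding

variable {d : ℕ}

theorem embedA_add (M N : Matrix (D2 d) (D2 d) ℂ) : embedA (M + N) = embedA M + embedA N := by
  ext p q
  simp only [embedA, of_apply, Matrix.add_apply]
  split_ifs <;> simp

theorem embedB_add (M N : Matrix (D2 d) (D2 d) ℂ) : embedB (M + N) = embedB M + embedB N := by
  ext p q
  simp only [embedB, of_apply, Matrix.add_apply]
  split_ifs <;> simp

theorem embedA_kronecker (X Y : Matrix (Fin d) (Fin d) ℂ) :
    embedA (X ⊗ₖ Y) = ((1 : Matrix (Fin d) (Fin d) ℂ) ⊗ₖ X) ⊗ₖ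
      ((Y ⊗ₖ (1 : Matrix (Fin d) (Fin d) ℂ)) ⊗ₖ (1 : Matrix (D2 d) (D2 d) ℂ)) := by
  ext p q
  simp only [embedA, of_apply, kroneckerMap_apply, one_apply]
  split_ifs <;> simp_all

theorem embedB_kronecker (X Y : Matrix (Fin d) (Fin d) ℂ) :
    embedB (X ⊗ₖ Y) = (1 : Matrix (D2 d) (D2 d) ℂ) ⊗ₖ
      (((1 : Matrix (Fin d) (Fin d) ℂ) ⊗ₖ X) ⊗ₖ (Y ⊗ₖ (1 : Matrix (Fin d) (Fin d) ℂ))) := by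
  ext p q
  simp only [embedB, of_apply, kroneckerMap_apply, one_apply]
  split_ifs <;> simp_all

theorem embedA_mul (M N : Matrix (D2 d) (D2 d) ℂ) : embedA (M * N) = embedA M * embedA N := by
  induction M using kronecker_induction with
  | add M M' hM hM' => simp only [add_mul, embedA_add, hM, hM']
  | kronecker X Y =>
    induction N using kronecker_induction with
    | add N N' hN hN' => simp only [mul_add, embedA_add, hN, hN']
    | kronecker Z W => simp only [embedA_kronecker, ← mul_kronecker_mul, mul_one]

theorem commute_embedA_embedB (M N : Matrix (D2 d) (D2 d) ℂ) :
    Commute (embedA M) (embedB N) := by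
  induction M using kronecker_induction with
  | add M M' hM hM' => simpa only [embedA_add] using hM.add_left hM'
  | kronecker X Y =>
    induction N using kronecker_induction with
    | add N N' hN hN' => simpa only [embedB_add] using hN.add_right hN'
    | kronecker Z W =>
      simp only [Commute, SemiconjBy, embedA_kronecker, embedB_kronecker, ← mul_kronecker_mul,
        mul_one, one_mul]

theorem isHermitian_embedA {M : Matrix (D2 d) (D2 d) ℂ} (hM : M.IsHermitian) :
    (embedA M).IsHermitian := by
  ext p q
  simp only [conjTranspose_apply, embedA, of_apply, apply_ite star, star_zero, hM.apply, eq_comm]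

end Embedding

section Rotation

variable {d : ℕ}

/-- The cyclic shift of the three sources, which moves Bob's systems to the place of Alice's,
Charlie's to the place of Bob's and Alice's to the place of Charlie's. The network is symmetric
under it, so that facts about Alice and the pair Alice–Bob carry over to the other parties. -/
def rotate : TriIdx d ≃ TriIdx d :=
  (Equiv.prodComm _ _).trans (Equiv.prodAssoc _ _ _)

theorem embedB_eq_submatrix_rotate (M : Matrix (D2 d) (D2 d) ℂ) :
    embedB M = (embedA M).submatrix rotate rotate := by
  ext p q
  simp [embedA, embedB, rotate, and_comm, and_assoc]

theorem embedC_eq_submatrix_rotate (M : Matrix (D2 d) (D2 d) ℂ) :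
    embedC M = (embedB M).submatrix rotate rotate := by
  ext p q
  simp [embedB, embedC, rotate, and_comm, and_assoc, and_left_comm]

theorem embedA_eq_submatrix_rotate (M : Matrix (D2 d) (D2 d) ℂ) :
    embedA M = (embedC M).submatrix rotate rotate := by
  ext p q
  simp [embedA, embedC, rotate, and_comm, and_left_comm]

theorem isHermitian_embedB {M : Matrix (D2 d) (D2 d) ℂ} (hM : M.IsHermitian) :
    (embedB M).IsHermitian := by
  rw [embedB_eq_submatrix_rotate]
  exact (isHermitian_embedA hM).submatrix rotate

theorem isHermitian_embedC {M : Matrix (D2 d) (D2 d) ℂ} (hM : M.IsHermitian) :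
    (embedC M).IsHermitian := by
  rw [embedC_eq_submatrix_rotate]
  exact (isHermitian_embedB hM).submatrix rotate

theorem commute_embedB_embedC (M N : Matrix (D2 d) (D2 d) ℂ) :
    Commute (embedB M) (embedC N) := by
  rw [embedB_eq_submatrix_rotate, embedC_eq_submatrix_rotate]
  exact commute_submatrix_equiv (commute_embedA_embedB M N) rotate

theorem commute_embedC_embedA (M N : Matrix (D2 d) (D2 d) ℂ) :
    Commute (embedC M) (embedA N) := by
  rw [embedC_eq_submatrix_rotate, embedA_eq_submatrix_rotate]
  exact commute_submatrix_equiv (commute_embedB_embedC M N) rotate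

theorem btnState_eq_submatrix_rotate (ρa ρb ρc : Matrix (D2 d) (D2 d) ℂ) :
    btnState ρa ρb ρc = (btnState ρb ρc ρa).submatrix rotate rotate := by
  ext p q
  simp [btnState, rotate, mul_comm, mul_left_comm]

end Rotation

section NetworkCovariance

variable {d : ℕ} {ρa ρb ρc : Matrix (D2 d) (D2 d) ℂ}

theorem IsDensity.btnState (hρa : IsDensity ρa) (hρb : IsDensity ρb) (hρc : IsDensity ρc) :
    IsDensity (btnState ρa ρb ρc) :=
  ⟨hρb.1.kronecker (hρc.1.kronecker hρa.1), by
    simp [_root_.btnState, trace_kronecker, hρa.2, hρb.2, hρc.2]⟩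

theorem trace_embedA_mul_btnState (hρa : ρa.trace = 1) (M : Matrix (D2 d) (D2 d) ℂ) :
    (embedA M * btnState ρa ρb ρc).trace = (M * (margA1 ρb ⊗ₖ margA2 ρc)).trace := by
  induction M using kronecker_induction with
  | add M N hM hN => simp only [embedA_add, add_mul, trace_add, hM, hN]
  | kronecker X Y =>
    simp only [embedA_kronecker, btnState, ← mul_kronecker_mul, trace_kronecker, one_mul, hρa,
      mul_one, trace_one_kronecker_mul, trace_kronecker_one_mul, margA1, margA2]

theorem trace_embedB_mul_btnState (hρb : ρb.trace = 1) (N : Matrix (D2 d) (D2 d) ℂ) :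
    (embedB N * btnState ρa ρb ρc).trace = (N * (margB1 ρc ⊗ₖ margB2 ρa)).trace := by
  induction N using kronecker_induction with
  | add M N hM hN => simp only [embedB_add, add_mul, trace_add, hM, hN]
  | kronecker X Y =>
    simp only [embedB_kronecker, btnState, ← mul_kronecker_mul, trace_kronecker, one_mul, hρb,
      trace_one_kronecker_mul, trace_kronecker_one_mul, margB1, margB2]

theorem trace_embedA_mul_embedB_mul_btnState (M N : Matrix (D2 d) (D2 d) ℂ) :
    (embedA M * embedB N * btnState ρa ρb ρc).trace =
      ((reduceSnd (margA1 ρb) M ⊗ₖ reduceFst (margB2 ρa) N) * ρc).trace := by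
  induction M using kronecker_induction with
  | add M M' hM hM' =>
    simp only [embedA_add, add_mul, trace_add, map_add, add_kronecker, hM, hM']
  | kronecker X Y =>
    induction N using kronecker_induction with
    | add N N' hN hN' =>
      simp only [embedB_add, mul_add, add_mul, trace_add, map_add, kronecker_add, hN, hN']
    | kronecker Z W =>
      simp only [embedA_kronecker, embedB_kronecker, btnState, ← mul_kronecker_mul, mul_one,
        one_mul, trace_kronecker, trace_one_kronecker_mul, trace_kronecker_one_mul,
        reduceSnd_kronecker, reduceFst_kronecker, margA1, margB2, smul_kronecker, kronecker_smul,
        smul_mul_assoc, trace_smul, smul_eq_mul]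
      ring

theorem stateCov_embedA_embedB (hρa : ρa.trace = 1) (hρb : ρb.trace = 1)
    (M N : Matrix (D2 d) (D2 d) ℂ) :
    stateCov (btnState ρa ρb ρc) (embedA M) (embedB N) =
      stateCov ρc (redA2 ρb M ⊗ₖ (1 : Matrix (Fin d) (Fin d) ℂ))
        ((1 : Matrix (Fin d) (Fin d) ℂ) ⊗ₖ redB1 ρa N) := by
  rw [stateCov_apply, stateCov_apply, trace_embedA_mul_embedB_mul_btnState,
    trace_embedA_mul_btnState hρa, trace_embedB_mul_btnState hρb,
    trace_mul_kronecker_eq_reduceSnd, trace_mul_kronecker_eq_reduceFst, ← mul_kronecker_mul,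
    mul_one, one_mul, trace_kronecker_one_mul, trace_one_kronecker_mul]
  rfl

theorem stateCov_embedB_embedC (hρb : ρb.trace = 1) (hρc : ρc.trace = 1)
    (M N : Matrix (D2 d) (D2 d) ℂ) :
    stateCov (btnState ρa ρb ρc) (embedB M) (embedC N) =
      stateCov ρa (redB2 ρc M ⊗ₖ (1 : Matrix (Fin d) (Fin d) ℂ))
        ((1 : Matrix (Fin d) (Fin d) ℂ) ⊗ₖ redC1 ρb N) := by
  rw [btnState_eq_submatrix_rotate, embedB_eq_submatrix_rotate, embedC_eq_submatrix_rotate,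
    stateCov_submatrix_equiv]
  exact stateCov_embedA_embedB hρb hρc M N

theorem stateCov_embedC_embedA (hρc : ρc.trace = 1) (hρa : ρa.trace = 1)
    (M N : Matrix (D2 d) (D2 d) ℂ) :
    stateCov (btnState ρa ρb ρc) (embedC M) (embedA N) =
      stateCov ρb (redC2 ρa M ⊗ₖ (1 : Matrix (Fin d) (Fin d) ℂ))
        ((1 : Matrix (Fin d) (Fin d) ℂ) ⊗ₖ redA1 ρc N) := by
  rw [btnState_eq_submatrix_rotate, embedC_eq_submatrix_rotate, embedA_eq_submatrix_rotate,
    stateCov_submatrix_equiv]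
  exact stateCov_embedB_embedC hρc hρa M N

theorem stateCov_embedA_interaction_embedB (hρa : ρa.trace = 1) (hρb : ρb.trace = 1)
    (hρc : ρc.trace = 1) (M N : Matrix (D2 d) (D2 d) ℂ) :
    stateCov (btnState ρa ρb ρc) (embedA (interaction (margA1 ρb) (margA2 ρc) M)) (embedB N) =
      0 := by
  have hA1 : (margA1 ρb).trace = 1 := (trace_ptrace₁ ρb).trans hρb
  have redA2_interaction : redA2 ρb (interaction (margA1 ρb) (margA2 ρc) M) =
      -(M * (margA1 ρb ⊗ₖ margA2 ρc)).trace • (1 : Matrix (Fin d) (Fin d) ℂ) :=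
    reduceSnd_interaction hA1 M
  rw [stateCov_embedA_embedB hρa hρb, redA2_interaction, smul_kronecker, one_kronecker_one,
    map_smul, LinearMap.smul_apply, stateCov_one_left hρc, smul_zero]

theorem stateCov_embedB_interaction_embedC (hρa : ρa.trace = 1) (hρb : ρb.trace = 1)
    (hρc : ρc.trace = 1) (M N : Matrix (D2 d) (D2 d) ℂ) :
    stateCov (btnState ρa ρb ρc) (embedB (interaction (margB1 ρc) (margB2 ρa) M)) (embedC N) =
      0 := by
  rw [btnState_eq_submatrix_rotate, embedB_eq_submatrix_rotate, embedC_eq_submatrix_rotate,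
    stateCov_submatrix_equiv]
  exact stateCov_embedA_interaction_embedB hρb hρc hρa M N

theorem stateCov_embedC_interaction_embedA (hρa : ρa.trace = 1) (hρb : ρb.trace = 1)
    (hρc : ρc.trace = 1) (M N : Matrix (D2 d) (D2 d) ℂ) :
    stateCov (btnState ρa ρb ρc) (embedC (interaction (margC1 ρa) (margC2 ρb) M)) (embedA N) =
      0 := by
  rw [btnState_eq_submatrix_rotate, embedC_eq_submatrix_rotate, embedA_eq_submatrix_rotate,
    stateCov_submatrix_equiv]
  exact stateCov_embedB_interaction_embedC hρb hρc hρa M N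

theorem stateCov_embedA_embedA (hρa : ρa.trace = 1) (hρb : ρb.trace = 1) (hρc : ρc.trace = 1)
    (M N : Matrix (D2 d) (D2 d) ℂ) :
    stateCov (btnState ρa ρb ρc) (embedA M) (embedA N) =
      stateCov ρc (redA2 ρb M ⊗ₖ (1 : Matrix (Fin d) (Fin d) ℂ))
          (redA2 ρb N ⊗ₖ (1 : Matrix (Fin d) (Fin d) ℂ)) +
        stateCov ρb ((1 : Matrix (Fin d) (Fin d) ℂ) ⊗ₖ redA1 ρc M)
          ((1 : Matrix (Fin d) (Fin d) ℂ) ⊗ₖ redA1 ρc N) +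
        stateCov (btnState ρa ρb ρc) (embedA (interaction (margA1 ρb) (margA2 ρc) M))
          (embedA (interaction (margA1 ρb) (margA2 ρc) N)) := by
  have stateCov_embedA (M N : Matrix (D2 d) (D2 d) ℂ) :
      stateCov (btnState ρa ρb ρc) (embedA M) (embedA N) =
        stateCov (margA1 ρb ⊗ₖ margA2 ρc) M N := by
    simp only [stateCov_apply, ← embedA_mul, trace_embedA_mul_btnState hρa]
  have hA1 : (margA1 ρb).trace = 1 := (trace_ptrace₁ ρb).trans hρb
  have hA2 : (margA2 ρc).trace = 1 := (trace_ptrace₂ ρc).trans hρc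
  rw [stateCov_embedA, stateCov_embedA, stateCov_kronecker_one, stateCov_one_kronecker,
    stateCov_kronecker_eq_add_interaction hA1 hA2, add_comm (stateCov (margA1 ρb) _ _)]
  rfl

theorem stateCov_embedB_embedB (hρa : ρa.trace = 1) (hρb : ρb.trace = 1) (hρc : ρc.trace = 1)
    (M N : Matrix (D2 d) (D2 d) ℂ) :
    stateCov (btnState ρa ρb ρc) (embedB M) (embedB N) =
      stateCov ρa (redB2 ρc M ⊗ₖ (1 : Matrix (Fin d) (Fin d) ℂ))
          (redB2 ρc N ⊗ₖ (1 : Matrix (Fin d) (Fin d) ℂ)) +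
        stateCov ρc ((1 : Matrix (Fin d) (Fin d) ℂ) ⊗ₖ redB1 ρa M)
          ((1 : Matrix (Fin d) (Fin d) ℂ) ⊗ₖ redB1 ρa N) +
        stateCov (btnState ρa ρb ρc) (embedB (interaction (margB1 ρc) (margB2 ρa) M))
          (embedB (interaction (margB1 ρc) (margB2 ρa) N)) := by
  simp only [btnState_eq_submatrix_rotate ρa ρb ρc, embedB_eq_submatrix_rotate,
    stateCov_submatrix_equiv]
  exact stateCov_embedA_embedA hρb hρc hρa M N

theorem stateCov_embedC_embedC (hρa : ρa.trace = 1) (hρb : ρb.trace = 1) (hρc : ρc.trace = 1)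
    (M N : Matrix (D2 d) (D2 d) ℂ) :
    stateCov (btnState ρa ρb ρc) (embedC M) (embedC N) =
      stateCov ρb (redC2 ρa M ⊗ₖ (1 : Matrix (Fin d) (Fin d) ℂ))
          (redC2 ρa N ⊗ₖ (1 : Matrix (Fin d) (Fin d) ℂ)) +
        stateCov ρa ((1 : Matrix (Fin d) (Fin d) ℂ) ⊗ₖ redC1 ρb M)
          ((1 : Matrix (Fin d) (Fin d) ℂ) ⊗ₖ redC1 ρb N) +
        stateCov (btnState ρa ρb ρc) (embedC (interaction (margC1 ρa) (margC2 ρb) M))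
          (embedC (interaction (margC1 ρa) (margC2 ρb) N)) := by
  simp only [btnState_eq_submatrix_rotate ρa ρb ρc, embedC_eq_submatrix_rotate,
    stateCov_submatrix_equiv]
  exact stateCov_embedB_embedB hρb hρc hρa M N

end NetworkCovariance

section Families

variable {d : ℕ} {ιA ιB ιC : Type*}

/-- The party an index of the combined family of observables belongs to, numbered as by `sector`;
the families may be indexed by arbitrary types. -/
def party : ιA ⊕ (ιB ⊕ ιC) → Fin 3 :=
  Sum.elim (fun _ => 0) (Sum.elim (fun _ => 1) (fun _ => 2))

/-- The combined family of the observables of Alice, Bob and Charlie on the network. -/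
def localObs (A : ιA → Matrix (D2 d) (D2 d) ℂ) (B : ιB → Matrix (D2 d) (D2 d) ℂ)
    (C : ιC → Matrix (D2 d) (D2 d) ℂ) : ιA ⊕ (ιB ⊕ ιC) → Matrix (TriIdx d) (TriIdx d) ℂ :=
  Sum.elim (fun i => embedA (A i))
    (Sum.elim (fun j => embedB (B j)) (fun k => embedC (C k)))

variable (ρa ρb ρc : Matrix (D2 d) (D2 d) ℂ) (A : ιA → Matrix (D2 d) (D2 d) ℂ)
  (B : ιB → Matrix (D2 d) (D2 d) ℂ) (C : ιC → Matrix (D2 d) (D2 d) ℂ)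

/-- The reduced observables on the source `ρ_c` of Alice and Bob; Charlie's are `0`. -/
def sourceObsC : ιA ⊕ (ιB ⊕ ιC) → Matrix (D2 d) (D2 d) ℂ :=
  Sum.elim (fun i => redA2 ρb (A i) ⊗ₖ (1 : Matrix (Fin d) (Fin d) ℂ))
    (Sum.elim (fun j => (1 : Matrix (Fin d) (Fin d) ℂ) ⊗ₖ redB1 ρa (B j)) (fun _ => 0))

/-- The reduced observables on the source `ρ_b` of Charlie and Alice; Bob's are `0`. -/
def sourceObsB : ιA ⊕ (ιB ⊕ ιC) → Matrix (D2 d) (D2 d) ℂ :=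
  Sum.elim (fun i => (1 : Matrix (Fin d) (Fin d) ℂ) ⊗ₖ redA1 ρc (A i))
    (Sum.elim (fun _ => 0) (fun k => redC2 ρa (C k) ⊗ₖ (1 : Matrix (Fin d) (Fin d) ℂ)))

/-- The reduced observables on the source `ρ_a` of Bob and Charlie; Alice's are `0`. -/
def sourceObsA : ιA ⊕ (ιB ⊕ ιC) → Matrix (D2 d) (D2 d) ℂ :=
  Sum.elim (fun _ => 0)
    (Sum.elim (fun j => redB2 ρc (B j) ⊗ₖ (1 : Matrix (Fin d) (Fin d) ℂ))
      (fun k => (1 : Matrix (Fin d) (Fin d) ℂ) ⊗ₖ redC1 ρb (C k)))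

/-- The interaction parts of the observables of the three parties. Their covariance matrix is the
remainder `R`. -/
def interactionObs : ιA ⊕ (ιB ⊕ ιC) → Matrix (TriIdx d) (TriIdx d) ℂ :=
  localObs (fun i => interaction (margA1 ρb) (margA2 ρc) (A i))
    (fun j => interaction (margB1 ρc) (margB2 ρa) (B j))
    (fun k => interaction (margC1 ρa) (margC2 ρb) (C k))

variable {ρa ρb ρc A B C}

theorem isHermitian_localObs (hA : ∀ i, (A i).IsHermitian) (hB : ∀ j, (B j).IsHermitian)
    (hC : ∀ k, (C k).IsHermitian) : ∀ p, (localObs A B C p).IsHermitian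
  | .inl i => isHermitian_embedA (hA i)
  | .inr (.inl j) => isHermitian_embedB (hB j)
  | .inr (.inr k) => isHermitian_embedC (hC k)

theorem isHermitian_interactionObs (hρa : ρa.IsHermitian) (hρb : ρb.IsHermitian)
    (hρc : ρc.IsHermitian) (hA : ∀ i, (A i).IsHermitian) (hB : ∀ j, (B j).IsHermitian)
    (hC : ∀ k, (C k).IsHermitian) (p : ιA ⊕ (ιB ⊕ ιC)) :
    (interactionObs ρa ρb ρc A B C p).IsHermitian :=
  isHermitian_localObs
    (fun i => isHermitian_interaction (isHermitian_ptrace₁ hρb) (isHermitian_ptrace₂ hρc) (hA i))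
    (fun j => isHermitian_interaction (isHermitian_ptrace₁ hρc) (isHermitian_ptrace₂ hρa) (hB j))
    (fun k => isHermitian_interaction (isHermitian_ptrace₁ hρa) (isHermitian_ptrace₂ hρb) (hC k))
    p

theorem isHermitian_sourceObsC (hρa : ρa.IsHermitian) (hρb : ρb.IsHermitian)
    (hA : ∀ i, (A i).IsHermitian) (hB : ∀ j, (B j).IsHermitian) :
    ∀ p : ιA ⊕ (ιB ⊕ ιC), (sourceObsC ρa ρb A B p).IsHermitian
  | .inl i => isHermitian_kronecker
      (isHermitian_reduceSnd (isHermitian_ptrace₁ hρb) (hA i)) isHermitian_one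
  | .inr (.inl j) => isHermitian_kronecker isHermitian_one
      (isHermitian_reduceFst (isHermitian_ptrace₂ hρa) (hB j))
  | .inr (.inr _) => isHermitian_zero

theorem isHermitian_sourceObsB (hρa : ρa.IsHermitian) (hρc : ρc.IsHermitian)
    (hA : ∀ i, (A i).IsHermitian) (hC : ∀ k, (C k).IsHermitian) :
    ∀ p : ιA ⊕ (ιB ⊕ ιC), (sourceObsB ρa ρc A C p).IsHermitian
  | .inl i => isHermitian_kronecker isHermitian_one
      (isHermitian_reduceFst (isHermitian_ptrace₂ hρc) (hA i))
  | .inr (.inl _) => isHermitian_zero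
  | .inr (.inr k) => isHermitian_kronecker
      (isHermitian_reduceSnd (isHermitian_ptrace₁ hρa) (hC k)) isHermitian_one

theorem isHermitian_sourceObsA (hρb : ρb.IsHermitian) (hρc : ρc.IsHermitian)
    (hB : ∀ j, (B j).IsHermitian) (hC : ∀ k, (C k).IsHermitian) :
    ∀ p : ιA ⊕ (ιB ⊕ ιC), (sourceObsA ρb ρc B C p).IsHermitian
  | .inl _ => isHermitian_zero
  | .inr (.inl j) => isHermitian_kronecker
      (isHermitian_reduceSnd (isHermitian_ptrace₁ hρc) (hB j)) isHermitian_one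
  | .inr (.inr k) => isHermitian_kronecker isHermitian_one
      (isHermitian_reduceFst (isHermitian_ptrace₂ hρb) (hC k))

theorem commute_localObs_of_party_ne :
    ∀ {p q : ιA ⊕ (ιB ⊕ ιC)}, party p ≠ party q → Commute (localObs A B C p) (localObs A B C q)
  | .inl _, .inl _, h | .inr (.inl _), .inr (.inl _), h | .inr (.inr _), .inr (.inr _), h =>
    absurd rfl h
  | .inl _, .inr (.inl _), _ => commute_embedA_embedB _ _
  | .inr (.inl _), .inr (.inr _), _ => commute_embedB_embedC _ _
  | .inr (.inr _), .inl _, _ => commute_embedC_embedA _ _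
  | .inr (.inl _), .inl _, _ => (commute_embedA_embedB _ _).symm
  | .inr (.inr _), .inr (.inl _), _ => (commute_embedB_embedC _ _).symm
  | .inl _, .inr (.inr _), _ => (commute_embedC_embedA _ _).symm

theorem covMat_interactionObs_of_party_ne (hρa : ρa.trace = 1) (hρb : ρb.trace = 1)
    (hρc : ρc.trace = 1) {p q : ιA ⊕ (ιB ⊕ ιC)} (hpq : party p ≠ party q) :
    covMat (interactionObs ρa ρb ρc A B C) (btnState ρa ρb ρc) p q = 0 := by
  have hcomm := stateCov_comm_of_commute (btnState ρa ρb ρc)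
    (commute_localObs_of_party_ne (A := fun i => interaction (margA1 ρb) (margA2 ρc) (A i))
      (B := fun j => interaction (margB1 ρc) (margB2 ρa) (B j))
      (C := fun k => interaction (margC1 ρa) (margC2 ρb) (C k)) hpq)
  match p, q with
  | .inl _, .inl _ | .inr (.inl _), .inr (.inl _) | .inr (.inr _), .inr (.inr _) =>
    exact absurd rfl hpq
  | .inl _, .inr (.inl _) => exact stateCov_embedA_interaction_embedB hρa hρb hρc _ _
  | .inr (.inl _), .inr (.inr _) => exact stateCov_embedB_interaction_embedC hρa hρb hρc _ _
  | .inr (.inr _), .inl _ => exact stateCov_embedC_interaction_embedA hρa hρb hρc _ _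
  | .inr (.inl _), .inl _ =>
    exact hcomm.trans (stateCov_embedA_interaction_embedB hρa hρb hρc _ _)
  | .inr (.inr _), .inr (.inl _) =>
    exact hcomm.trans (stateCov_embedB_interaction_embedC hρa hρb hρc _ _)
  | .inl _, .inr (.inr _) =>
    exact hcomm.trans (stateCov_embedC_interaction_embedA hρa hρb hρc _ _)

theorem covMat_localObs_of_party_ne (hρa : ρa.trace = 1) (hρb : ρb.trace = 1)
    (hρc : ρc.trace = 1) {p q : ιA ⊕ (ιB ⊕ ιC)} (hpq : party p ≠ party q) :
    covMat (localObs A B C) (btnState ρa ρb ρc) p q =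
      covMat (sourceObsC ρa ρb A B) ρc p q + covMat (sourceObsB ρa ρc A C) ρb p q +
        covMat (sourceObsA ρb ρc B C) ρa p q := by
  have hcomm := stateCov_comm_of_commute (btnState ρa ρb ρc)
    (commute_localObs_of_party_ne (A := A) (B := B) (C := C) hpq)
  have hswap (ρ : Matrix (D2 d) (D2 d) ℂ) (X Y : Matrix (Fin d) (Fin d) ℂ) :=
    stateCov_comm_of_commute ρ (commute_kronecker_one_one_kronecker X Y)
  simp only [covMat_apply]
  match p, q with
  | .inl _, .inl _ | .inr (.inl _), .inr (.inl _) | .inr (.inr _), .inr (.inr _) =>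
    exact absurd rfl hpq
  | .inl _, .inr (.inl _) =>
    simp [localObs, sourceObsA, sourceObsB, sourceObsC, stateCov_embedA_embedB hρa hρb]
  | .inr (.inl _), .inr (.inr _) =>
    simp [localObs, sourceObsA, sourceObsB, sourceObsC, stateCov_embedB_embedC hρb hρc]
  | .inr (.inr _), .inl _ =>
    simp [localObs, sourceObsA, sourceObsB, sourceObsC, stateCov_embedC_embedA hρc hρa, hswap]
  | .inr (.inl _), .inl _ =>
    rw [hcomm]
    simp [localObs, sourceObsA, sourceObsB, sourceObsC, stateCov_embedA_embedB hρa hρb, hswap]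
  | .inr (.inr _), .inr (.inl _) =>
    rw [hcomm]
    simp [localObs, sourceObsA, sourceObsB, sourceObsC, stateCov_embedB_embedC hρb hρc, hswap]
  | .inl _, .inr (.inr _) =>
    rw [hcomm]
    simp [localObs, sourceObsA, sourceObsB, sourceObsC, stateCov_embedC_embedA hρc hρa, hswap]

theorem covMat_localObs (hρa : ρa.trace = 1) (hρb : ρb.trace = 1) (hρc : ρc.trace = 1) :
    covMat (localObs A B C) (btnState ρa ρb ρc) =
      covMat (sourceObsC ρa ρb A B) ρc + covMat (sourceObsB ρa ρc A C) ρb +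
        covMat (sourceObsA ρb ρc B C) ρa +
        covMat (interactionObs ρa ρb ρc A B C) (btnState ρa ρb ρc) := by
  ext p q
  simp only [Matrix.add_apply]
  by_cases hpq : party p = party q
  · simp only [covMat_apply]
    match p, q with
    | .inl _, .inr (.inl _) | .inr (.inl _), .inr (.inr _) | .inr (.inr _), .inl _
    | .inr (.inl _), .inl _ | .inr (.inr _), .inr (.inl _) | .inl _, .inr (.inr _) =>
      simp [party] at hpq
    | .inl i, .inl i' =>
      simpa [localObs, interactionObs, sourceObsA, sourceObsB, sourceObsC] using
        stateCov_embedA_embedA hρa hρb hρc (A i) (A i')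
    | .inr (.inl j), .inr (.inl j') =>
      simpa [localObs, interactionObs, sourceObsA, sourceObsB, sourceObsC, add_comm] using
        stateCov_embedB_embedB hρa hρb hρc (B j) (B j')
    | .inr (.inr k), .inr (.inr k') =>
      simpa [localObs, interactionObs, sourceObsA, sourceObsB, sourceObsC] using
        stateCov_embedC_embedC hρa hρb hρc (C k) (C k')
  · rw [covMat_localObs_of_party_ne hρa hρb hρc hpq,
      covMat_interactionObs_of_party_ne hρa hρb hρc hpq, add_zero]

end Families

theorem stmt0_general {d : ℕ} {ιA ιB ιC : Type*} {ρa ρb ρc : Matrix (D2 d) (D2 d) ℂ}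
    (hρa : IsDensity ρa) (hρb : IsDensity ρb) (hρc : IsDensity ρc)
    {A : ιA → Matrix (D2 d) (D2 d) ℂ} (hA : ∀ i, (A i).IsHermitian)
    {B : ιB → Matrix (D2 d) (D2 d) ℂ} (hB : ∀ j, (B j).IsHermitian)
    {C : ιC → Matrix (D2 d) (D2 d) ℂ} (hC : ∀ k, (C k).IsHermitian)
    {Γ Tc Tb Ta R : Matrix (ιA ⊕ (ιB ⊕ ιC)) (ιA ⊕ (ιB ⊕ ιC)) ℂ}
    (hΓ : Γ = covMat (localObs A B C) (btnState ρa ρb ρc))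
    (hTc : Tc = covMat (sourceObsC ρa ρb A B) ρc)
    (hTb : Tb = covMat (sourceObsB ρa ρc A C) ρb)
    (hTa : Ta = covMat (sourceObsA ρb ρc B C) ρa)
    (hR : R = Γ - Tc - Tb - Ta) :
    (∀ p q, party p ≠ party q → R p q = 0) ∧
      R.PosSemidef ∧ Tc.PosSemidef ∧ Tb.PosSemidef ∧ Ta.PosSemidef ∧
      Γ = Tc + Tb + Ta + R := by
  have ha := hρa.1.isHermitian
  have hb := hρb.1.isHermitian
  have hc := hρc.1.isHermitian
  have hR' : R = covMat (interactionObs ρa ρb ρc A B C) (btnState ρa ρb ρc) := by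
    rw [hR, hΓ, hTc, hTb, hTa, covMat_localObs hρa.2 hρb.2 hρc.2]
    abel
  refine ⟨fun p q hpq => ?_, ?_, ?_, ?_, ?_, by rw [hR]; abel⟩
  · rw [hR', covMat_interactionObs_of_party_ne hρa.2 hρb.2 hρc.2 hpq]
  · rw [hR']
    exact posSemidef_covMat (hρa.btnState hρb hρc) (isHermitian_interactionObs ha hb hc hA hB hC)
  · exact hTc ▸ posSemidef_covMat hρc (isHermitian_sourceObsC ha hb hA hB)
  · exact hTb ▸ posSemidef_covMat hρb (isHermitian_sourceObsB ha hc hA hC)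
  · exact hTa ▸ posSemidef_covMat hρa (isHermitian_sourceObsA hb hc hB hC)

/-- Block decomposition of the covariance matrix of a basic
triangle network state: `Γ = T_c + T_b + T_a + R` with `T_a, T_b, T_c` the
covariance matrices of the reduced observables on the respective source states
(padded with zeros on the remaining sector) and `R` block-diagonal and positive
semidefinite; all four summands are positive semidefinite. -/
theorem stmt0 {d kA kB kC : ℕ} (hd : 1 ≤ d)
    (ρa ρb ρc : Matrix (D2 d) (D2 d) ℂ)
    (hρa : IsDensity ρa) (hρb : IsDensity ρb) (hρc : IsDensity ρc)
    (A : Fin kA → Matrix (D2 d) (D2 d) ℂ) (hA : ∀ i, (A i).IsHermitian)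
    (B : Fin kB → Matrix (D2 d) (D2 d) ℂ) (hB : ∀ j, (B j).IsHermitian)
    (C : Fin kC → Matrix (D2 d) (D2 d) ℂ) (hC : ∀ k, (C k).IsHermitian)
    -- the covariance matrix of the full family of local observables on ρ_BTN
    (Γ : Matrix (Fin kA ⊕ (Fin kB ⊕ Fin kC)) (Fin kA ⊕ (Fin kB ⊕ Fin kC)) ℂ)
    (hΓ : Γ = covMat
      (Sum.elim (fun i => embedA (A i))
        (Sum.elim (fun j => embedB (B j)) (fun k => embedC (C k))))
      (btnState ρa ρb ρc))
    -- T_c : CM of the reduced observables A_i^(2) ⊗ 1, 1 ⊗ B_j^(1) on ρ_c,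
    -- padded with zeros on the Charlie sector
    (Tc : Matrix (Fin kA ⊕ (Fin kB ⊕ Fin kC)) (Fin kA ⊕ (Fin kB ⊕ Fin kC)) ℂ)
    (hTc : Tc = covMat
      (Sum.elim (fun i => redA2 ρb (A i) ⊗ₖ (1 : Matrix (Fin d) (Fin d) ℂ))
        (Sum.elim (fun j => (1 : Matrix (Fin d) (Fin d) ℂ) ⊗ₖ redB1 ρa (B j))
          (fun _ => (0 : Matrix (D2 d) (D2 d) ℂ)))) ρc)
    -- T_b : CM of the reduced observables 1 ⊗ A_i^(1), C_k^(2) ⊗ 1 on ρ_b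
    -- (whose factors are ordered C₂, A₁), padded with zeros on the Bob sector
    (Tb : Matrix (Fin kA ⊕ (Fin kB ⊕ Fin kC)) (Fin kA ⊕ (Fin kB ⊕ Fin kC)) ℂ)
    (hTb : Tb = covMat
      (Sum.elim (fun i => (1 : Matrix (Fin d) (Fin d) ℂ) ⊗ₖ redA1 ρc (A i))
        (Sum.elim (fun _ => (0 : Matrix (D2 d) (D2 d) ℂ))
          (fun k => redC2 ρa (C k) ⊗ₖ (1 : Matrix (Fin d) (Fin d) ℂ)))) ρb)
    -- T_a : CM of the reduced observables B_j^(2) ⊗ 1, 1 ⊗ C_k^(1) on ρ_a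
    -- (whose factors are ordered B₂, C₁), padded with zeros on the Alice sector
    (Ta : Matrix (Fin kA ⊕ (Fin kB ⊕ Fin kC)) (Fin kA ⊕ (Fin kB ⊕ Fin kC)) ℂ)
    (hTa : Ta = covMat
      (Sum.elim (fun _ => (0 : Matrix (D2 d) (D2 d) ℂ))
        (Sum.elim (fun j => redB2 ρc (B j) ⊗ₖ (1 : Matrix (Fin d) (Fin d) ℂ))
          (fun k => (1 : Matrix (Fin d) (Fin d) ℂ) ⊗ₖ redC1 ρb (C k)))) ρa)
    (R : Matrix (Fin kA ⊕ (Fin kB ⊕ Fin kC)) (Fin kA ⊕ (Fin kB ⊕ Fin kC)) ℂ)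
    (hR : R = Γ - Tc - Tb - Ta) :
    (∀ p q, sector p ≠ sector q → R p q = 0) ∧
      R.PosSemidef ∧ Tc.PosSemidef ∧ Tb.PosSemidef ∧ Ta.PosSemidef ∧
      Γ = Tc + Tb + Ta + R :=
  stmt0_general hρa hρb hρc hA hB hC hΓ hTc hTb hTa hR
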